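/- Let q₀ ∈ ℍ ∖ ℝ and p ≥ 1. Then for all 0 ≤ k ≤ p, ((∂_s∂_c)^k Δ_{q₀}^p)(q₀) equals 2·k! if k = p and equals 0 otherwise. -/

import Mathlib

noncomputable section

open Quaternion

abbrev ℍq := Quaternion ℝ

/-- Spherical value of a function of a quaternionic variable. -/
def svalue (f : ℍq → ℍq) (x : ℍq) : ℍq := (f x + f (star x)) / 2

/-- Spherical derivative of a function of a quaternionic variable. -/
def sderiv' (f : ℍq → ℍq) (x : ℍq) : ℍq := (2 * x.im)⁻¹ * (f x - f (star x))

/-- The imaginary unit `Im(x)/|Im(x)|` attached to a (non-real) quaternion. -/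
def qJ (x : ℍq) : ℍq := (‖x.im‖)⁻¹ • x.im

/-- Slice (Cullen) derivative `∂_c f = (1/2)(∂/∂α − I ∂/∂β) f` at `x = α + Iβ`. -/
def cderiv (f : ℍq → ℍq) (x : ℍq) : ℍq :=
  (1/2 : ℝ) • (fderiv ℝ f x 1 - qJ x * fderiv ℝ f x (qJ x))

/-- The conjugate operator `∂̄_c f = (1/2)(∂/∂α + I ∂/∂β) f`. -/
def cderivBar (f : ℍq → ℍq) (x : ℍq) : ℍq :=
  (1/2 : ℝ) • (fderiv ℝ f x 1 + qJ x * fderiv ℝ f x (qJ x))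

/-- A circular (axially symmetric) subset of the quaternions. -/
def IsCircular (Ω : Set ℍq) : Prop :=
  ∀ x ∈ Ω, ∀ y : ℍq, y.re = x.re → ‖y.im‖ = ‖x.im‖ → y ∈ Ω

/-- A slice function on `Ω`: it is determined by the representation formula
`f(α + Iβ) = F₀(α,β) + I F₁(α,β)` with `F₀ = v_s f`, `F₁ = β ∂_s f`. -/
def IsSlice (Ω : Set ℍq) (f : ℍq → ℍq) : Prop :=
  ∀ x ∈ Ω, ∀ y ∈ Ω, x.re = y.re → ‖x.im‖ = ‖y.im‖ →
    f x = svalue f y + x.im * sderiv' f y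

/-- A slice regular function on a circular domain: a real-differentiable slice
function whose stem function is holomorphic, i.e. `∂̄_c f = 0` off the reals. -/
def IsSliceRegular (Ω : Set ℍq) (f : ℍq → ℍq) : Prop :=
  IsSlice Ω f ∧ DifferentiableOn ℝ f Ω ∧ ∀ x ∈ Ω, x.im ≠ 0 → cderivBar f x = 0

/-- Pointwise formula for the slice product `f·g = 𝓘(FG)` of two slice functions. -/
def sprod (f g : ℍq → ℍq) (x : ℍq) : ℍq :=
  svalue f x * svalue g x + x.im * x.im * (sderiv' f x * sderiv' g x)
    + x.im * (svalue f x * sderiv' g x + sderiv' f x * svalue g x)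

/-- Characteristic polynomial of `q₀`: `Δ_{q₀}(x) = x² − 2 Re(q₀) x + |q₀|²`. -/
def Delta (q₀ : ℍq) (x : ℍq) : ℍq := x ^ 2 - 2 * (q₀.re : ℍq) * x + ((‖q₀‖ ^ 2 : ℝ) : ℍq)

/-- The operator `∂_c ∂_s`. -/
def opCS (f : ℍq → ℍq) : ℍq → ℍq := cderiv (sderiv' f)

/-- The operator `∂_s ∂_c`. -/
def opSC (f : ℍq → ℍq) : ℍq → ℍq := sderiv' (cderiv f)

def imL : ℍq →L[ℝ] ℍq := LinearMap.toContinuousLinearMap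
  { toFun := fun x => x.im
    map_add' := fun x y => by ext <;> simp
    map_smul' := fun c x => by ext <;> simp }

def reL : ℍq →L[ℝ] ℝ := LinearMap.toContinuousLinearMap
  { toFun := fun x => x.re
    map_add' := fun x y => by simp
    map_smul' := fun c x => by simp }

lemma imL_apply (x : ℍq) : imL x = x.im := rfl
lemma reL_apply (x : ℍq) : reL x = x.re := rfl

def crd (x : ℍq) : ℝ × ℝ := (reL x, ‖imL x‖ ^ 2)

def crd' (x : ℍq) : ℍq →L[ℝ] ℝ × ℝ :=
  reL.prod (2 • (innerSL ℝ (imL x)).comp imL)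

lemma crd_has (x : ℍq) : HasFDerivAt crd (crd' x) x :=
  reL.hasFDerivAt.prodMk (imL.hasFDerivAt.norm_sq)

def rep (U V : ℝ × ℝ → ℝ) (x : ℍq) : ℍq := U (crd x) • (1 : ℍq) + V (crd x) • imL x

lemma im_norm_sq (x : ℍq) : x.im * x.im = (-(‖x.im‖ ^ 2)) • (1 : ℍq) := by
  rw [sq, ← Quaternion.normSq_eq_norm_mul_self]
  ext <;> simp [Quaternion.normSq_def'] <;> ring

lemma crd_star (x : ℍq) : crd (star x) = crd x := by
  have h : (star x).im = - x.im := by ext <;> simp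
  simp [crd, imL_apply, reL_apply, h]

lemma imL_star (x : ℍq) : imL (star x) = - imL x := by
  rw [imL_apply, imL_apply]; ext <;> simp

def dA (U : ℝ × ℝ → ℝ) (z : ℝ × ℝ) : ℝ := fderiv ℝ U z (1, 0)
def dT (U : ℝ × ℝ → ℝ) (z : ℝ × ℝ) : ℝ := fderiv ℝ U z (0, 1)

lemma rep_fderiv (U V : ℝ × ℝ → ℝ) (hU : Differentiable ℝ U) (hV : Differentiable ℝ V)
    (x v : ℍq) : fderiv ℝ (rep U V) x v =
      (fderiv ℝ U (crd x) (crd' x v)) • (1 : ℍq) + (V (crd x) • imL v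
        + (fderiv ℝ V (crd x) (crd' x v)) • imL x) := by
  have h1 := ((hU (crd x)).hasFDerivAt.comp x (crd_has x)).smul_const (1 : ℍq)
  have h2 := ((hV (crd x)).hasFDerivAt.comp x (crd_has x)).smul (imL.hasFDerivAt (x := x))
  have h := (h1.add h2).fderiv
  have e : rep U V = (fun y => (U ∘ crd) y • (1 : ℍq)) + (V ∘ crd) • imL := rfl
  rw [e, h]
  simp

lemma crd'_one (x : ℍq) : crd' x 1 = (1, 0) := by
  have : imL 1 = 0 := by rw [imL_apply]; ext <;> simp
  simp [crd', this, reL_apply]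

lemma imL_qJ (x : ℍq) : imL (qJ x) = qJ x := by
  simp only [imL_apply, qJ]; ext <;> simp

lemma crd'_qJ (x : ℍq) (hx : x.im ≠ 0) : crd' x (qJ x) = (2 * ‖x.im‖) • (0, 1) := by
  have h0 : ‖x.im‖ ≠ 0 := norm_ne_zero_iff.2 hx
  have : reL (qJ x) = 0 := by simp [reL_apply, qJ]
  have h2 : inner ℝ (imL x) (imL (qJ x)) = ‖x.im‖ := by
    rw [imL_qJ, qJ, imL_apply, real_inner_smul_right, real_inner_self_eq_norm_sq]
    field_simp
  simp [crd', this, h2]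

lemma cderiv_rep (U V : ℝ × ℝ → ℝ) (hU : Differentiable ℝ U) (hV : Differentiable ℝ V)
    (x : ℍq) (hx : x.im ≠ 0) : cderiv (rep U V) x =
      rep (fun z => (dA U z + V z + 2 * z.2 * dT V z) / 2)
        (fun z => (dA V z - 2 * dT U z) / 2) x := by
  have h0 : ‖x.im‖ ≠ 0 := norm_ne_zero_iff.2 hx
  have i1 : imL 1 = 0 := by rw [imL_apply]; ext <;> simp
  have hJ : qJ x * qJ x = (-1 : ℝ) • (1 : ℍq) := by
    rw [qJ, smul_mul_smul_comm, im_norm_sq, smul_smul]; congr 1; field_simp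
  have hx' : x.im = ‖x.im‖ • qJ x := by rw [qJ, smul_smul, mul_inv_cancel₀ h0, one_smul]
  have hz : (crd x).2 = ‖x.im‖ ^ 2 := rfl
  rw [cderiv, rep_fderiv U V hU hV, rep_fderiv U V hU hV, crd'_one, crd'_qJ x hx, imL_qJ, i1, rep]
  simp only [map_smul, ← dA.eq_1, ← dT.eq_1, imL_apply, hz]
  generalize ‖x.im‖ = r at *
  rw [hx']
  simp only [mul_add, mul_smul_comm, hJ, mul_one, smul_eq_mul]
  module

lemma sderiv_rep (U V : ℝ × ℝ → ℝ) (f : ℍq → ℍq) (hf : ∀ x : ℍq, x.im ≠ 0 → f x = rep U V x)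
    (x : ℍq) (hx : x.im ≠ 0) : sderiv' f x = rep V 0 x := by
  have hs : (star x).im ≠ 0 := by
    have := imL_star x
    rw [imL_apply, imL_apply] at this
    rw [this]; exact neg_ne_zero.2 hx
  rw [sderiv', hf x hx, hf _ hs, rep, rep, crd_star, imL_star, rep]
  have : (U (crd x) • (1 : ℍq) + V (crd x) • imL x) - (U (crd x) • 1 + V (crd x) • -imL x)
    = (2 * x.im) * (V (crd x) • (1 : ℍq)) := by
    rw [imL_apply, two_mul, mul_smul_comm, mul_one]; module
  have h2 : (2 : ℍq) * x.im ≠ 0 := by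
    intro h
    rw [two_mul, ← two_smul ℝ] at h
    exact hx ((smul_eq_zero.1 h).resolve_left two_ne_zero)
  rw [this, inv_mul_cancel_left₀ h2]
  simp

lemma opSC_rep (U V : ℝ × ℝ → ℝ) (hU : Differentiable ℝ U) (hV : Differentiable ℝ V)
    (f : ℍq → ℍq) (hf : ∀ x : ℍq, x.im ≠ 0 → f x = rep U V x)
    (x : ℍq) (hx : x.im ≠ 0) :
    opSC f x = rep (fun z => (dA V z - 2 * dT U z) / 2) 0 x := by
  refine sderiv_rep (fun z => (dA U z + V z + 2 * z.2 * dT V z) / 2) _ _ ?_ x hx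
  intro y hy
  rw [← cderiv_rep U V hU hV y hy]
  have ho : IsOpen {y : ℍq | imL y ≠ 0} := isOpen_ne_fun imL.continuous continuous_const
  have he : f =ᶠ[nhds y] rep U V := by
    filter_upwards [ho.mem_nhds hy] with w hw using hf w hw
  rw [cderiv, cderiv, he.fderiv_eq]

def dD (U : ℝ × ℝ → ℝ) (z : ℝ × ℝ) : ℝ := - dT U z

lemma dD_contDiff (U : ℝ × ℝ → ℝ) (hU : ContDiff ℝ (⊤ : ℕ∞) U) : ContDiff ℝ (⊤ : ℕ∞) (dD U) := by
  have : ContDiff ℝ (⊤ : ℕ∞) (fderiv ℝ U) := hU.fderiv_right (by simp)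
  exact (this.clm_apply contDiff_const).neg

lemma dD_iter_contDiff (U : ℝ × ℝ → ℝ) (hU : ContDiff ℝ (⊤ : ℕ∞) U) (k : ℕ) :
    ContDiff ℝ (⊤ : ℕ∞) (dD^[k] U) := by
  induction k with
  | zero => exact hU
  | succ k ih => rw [Function.iterate_succ_apply']; exact dD_contDiff _ ih

lemma opSC_iter_rep (U V : ℝ × ℝ → ℝ) (hU : ContDiff ℝ (⊤ : ℕ∞) U) (hV : ContDiff ℝ (⊤ : ℕ∞) V)
    (hCR : ∀ z, dA V z = - 2 * dT U z)
    (f : ℍq → ℍq) (hf : ∀ x : ℍq, x.im ≠ 0 → f x = rep U V x) (k : ℕ)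
    (x : ℍq) (hx : x.im ≠ 0) :
    opSC^[k + 1] f x = rep (fun z => 2 * (dD^[k + 1] U) z) 0 x := by
  induction k generalizing x with
  | zero =>
    have := opSC_rep U V (hU.differentiable (by simp)) (hV.differentiable (by simp)) f hf x hx
    simp only [zero_add, Function.iterate_one]
    rw [this]
    congr 1
    funext z
    rw [hCR, dD]; ring
  | succ k ih =>
    have hd : Differentiable ℝ (dD^[k + 1] U) :=
      (dD_iter_contDiff U hU (k + 1)).differentiable (by simp)
    rw [Function.iterate_succ_apply', Function.iterate_succ_apply' (f := dD)]
    rw [opSC_rep (fun z => 2 * (dD^[k + 1] U) z) 0 (hd.const_mul 2) (differentiable_const 0) _ ih x hx]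
    congr 1
    funext z
    have e1 : dA 0 z = 0 := by simp [dA]
    have e2 : dT (fun z => 2 * (dD^[k + 1] U) z) z = 2 * dT (dD^[k + 1] U) z := by
      rw [dT, fderiv_const_mul (hd z)]; simp [dT]
    rw [e1, e2, dD]; ring

lemma dD_iter_line (U : ℝ × ℝ → ℝ) (hU : ContDiff ℝ (⊤ : ℕ∞) U) (a b : ℝ) (p : ℕ)
    (h : ∀ t, U (a, t) = (b - t) ^ p) (k : ℕ) (t : ℝ) :
    (dD^[k] U) (a, t) = (p.descFactorial k : ℝ) * (b - t) ^ (p - k) := by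
  induction k generalizing t with
  | zero => simp [h]
  | succ k ih =>
    rw [Function.iterate_succ_apply', dD, dT]
    have hd : Differentiable ℝ (dD^[k] U) := (dD_iter_contDiff U hU k).differentiable (by simp)
    have hc : HasDerivAt (fun s : ℝ => (a, s)) ((0 : ℝ), (1 : ℝ)) t :=
      (hasDerivAt_const t a).prodMk (hasDerivAt_id t)
    have h1 := (hd (a, t)).hasFDerivAt.comp_hasDerivAt t hc
    have h2 : HasDerivAt (fun s : ℝ => (p.descFactorial k : ℝ) * (b - s) ^ (p - k))
      ((p.descFactorial k : ℝ) * (((p - k : ℕ) : ℝ) * (b - t) ^ (p - k - 1) * (-1))) t :=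
      (((hasDerivAt_id t).const_sub b).pow (p - k)).const_mul _
    have e : (dD^[k] U) ∘ (fun s : ℝ => (a, s)) =
      fun s : ℝ => (p.descFactorial k : ℝ) * (b - s) ^ (p - k) := by
      funext s; exact ih s
    rw [e] at h1
    rw [h1.unique h2, Nat.descFactorial_succ, Nat.sub_sub]
    push_cast; ring

/-- Stem components of the powers of the characteristic polynomial. -/
def UV (a b : ℝ) : ℕ → (ℝ × ℝ → ℝ) × (ℝ × ℝ → ℝ)
  | 0 => (fun _ => 1, fun _ => 0)
  | n + 1 => (fun z => (UV a b n).1 z * ((z.1 - a) ^ 2 - z.2 + b)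
        - z.2 * ((UV a b n).2 z * (2 * (z.1 - a))),
      fun z => (UV a b n).1 z * (2 * (z.1 - a)) + (UV a b n).2 z * ((z.1 - a) ^ 2 - z.2 + b))

lemma UV_contDiff (a b : ℝ) (n : ℕ) :
    ContDiff ℝ (⊤ : ℕ∞) (UV a b n).1 ∧ ContDiff ℝ (⊤ : ℕ∞) (UV a b n).2 := by
  induction n with
  | zero => exact ⟨contDiff_const, contDiff_const⟩
  | succ n ih =>
    obtain ⟨h1, h2⟩ := ih
    constructor <;> simp only [UV] <;> fun_prop

lemma UV_CR (a b : ℝ) (n : ℕ) (z : ℝ × ℝ) :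
    dA (UV a b n).2 z = - 2 * dT (UV a b n).1 z ∧
    dA (UV a b n).1 z = (UV a b n).2 z + 2 * z.2 * dT (UV a b n).2 z := by
  induction n with
  | zero => simp [UV, dA, dT]
  | succ n ih =>
    obtain ⟨h1, h2⟩ := ih
    have hu := (((UV_contDiff a b n).1.differentiable (by simp)) z).hasFDerivAt
    have hv := (((UV_contDiff a b n).2.differentiable (by simp)) z).hasFDerivAt
    have ht : HasFDerivAt (fun z : ℝ × ℝ => z.2) (ContinuousLinearMap.snd ℝ ℝ ℝ) z := hasFDerivAt_snd
    have ha : HasFDerivAt (fun z : ℝ × ℝ => z.1 - a) (ContinuousLinearMap.fst ℝ ℝ ℝ) z :=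
      hasFDerivAt_fst.sub_const a
    have hA := ((ha.pow 2).sub ht).add_const b
    have hB := ha.const_mul 2
    have hU := ((hu.mul hA).sub (ht.mul (hv.mul hB))).fderiv
    have hV := ((hu.mul hB).add (hv.mul hA)).fderiv
    have eU : fderiv ℝ (UV a b (n+1)).1 z = _ := hU
    have eV : fderiv ℝ (UV a b (n+1)).2 z = _ := hV
    simp only [dA, dT] at h1 h2 ⊢
    rw [eU, eV]
    simp [UV]
    constructor
    · rw [h1, h2]; ring
    · rw [h1, h2]; ring

lemma UV_line (a b : ℝ) (n : ℕ) (t : ℝ) : (UV a b n).1 (a, t) = (b - t) ^ n := by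
  induction n with
  | zero => simp [UV]
  | succ n ih => simp [UV, ih]; ring

lemma Delta_eq (q₀ x : ℍq) : Delta q₀ x =
    ((x.re - q₀.re) ^ 2 - ‖x.im‖ ^ 2 + ‖q₀.im‖ ^ 2) • (1 : ℍq) + (2 * (x.re - q₀.re)) • x.im := by
  have e : (2 : ℍq) * (q₀.re : ℍq) = ((2 * q₀.re : ℝ) : ℍq) := by push_cast; rfl
  rw [Delta, e]
  simp only [sq, ← Quaternion.normSq_eq_norm_mul_self]
  have hn : Quaternion.normSq q₀ = q₀.re ^ 2 + Quaternion.normSq q₀.im := by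
    simp [Quaternion.normSq_def']; ring
  generalize Quaternion.normSq q₀ = N at *
  generalize Quaternion.normSq q₀.im = M at *
  have hM : M = N - q₀.re ^ 2 := by linarith
  subst hM
  ext <;> simp [Quaternion.normSq_def'] <;> ring

lemma Delta_pow_eq (q₀ : ℍq) (p : ℕ) (x : ℍq) : Delta q₀ x ^ p =
    rep (UV q₀.re (‖q₀.im‖ ^ 2) p).1 (UV q₀.re (‖q₀.im‖ ^ 2) p).2 x := by
  induction p with
  | zero => simp [UV, rep]
  | succ n ih =>
    rw [pow_succ, ih, Delta_eq]
    simp only [rep, UV, imL_apply]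
    have hz : (crd x).2 = ‖x.im‖ ^ 2 := rfl
    have hz1 : (crd x).1 = x.re := rfl
    rw [hz, hz1]
    simp only [add_mul, mul_add, smul_mul_smul_comm, im_norm_sq, one_mul, mul_one]
    module

/-- `((∂_s∂_c)^k Δ_{q₀}^p)(q₀) = 2·k!` if `k = p`, `0` otherwise. -/
theorem opSC_iterate_Delta_pow (q₀ : ℍq) (hq₀ : q₀.im ≠ 0)
    (p k : ℕ) (hp : 1 ≤ p) (hk : k ≤ p) :
    opSC^[k] (fun x => Delta q₀ x ^ p) q₀
      = if k = p then 2 * (k.factorial : ℍq) else 0 := by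
  have hz : crd q₀ = (q₀.re, ‖q₀.im‖ ^ 2) := rfl
  obtain ⟨hU, hV⟩ := UV_contDiff q₀.re (‖q₀.im‖ ^ 2) p
  rcases k with _ | k
  · have h0 : (0 : ℕ) ≠ p := by omega
    have hp0 : p ≠ 0 := by omega
    rw [if_neg h0]
    simp [Delta_eq, hp0]
  · rw [opSC_iter_rep _ _ hU hV (fun z => (UV_CR _ _ p z).1) _
      (fun x _ => Delta_pow_eq q₀ p x) k q₀ hq₀, rep, hz,
      dD_iter_line _ hU _ _ p (UV_line _ _ p)]
    split_ifs with h
    · subst h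
      rw [Nat.descFactorial_self]
      have e : ((k + 1).factorial : ℝ) • (1 : ℍq) = ((k + 1).factorial : ℍq) := by
        rw [Nat.cast_smul_eq_nsmul, nsmul_one]
      rw [Nat.sub_self, pow_zero, mul_one, mul_smul, e, two_smul, two_mul]
      simp
    · have : p - (k + 1) ≠ 0 := by omega
      simp [this]
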